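/- With notation as before, if t_i = q when d | i and t_i = s when d ∤ i, with q ≥ s ≥ 0, then C_k(t_1,...,t_k) ≤ (s + k + (q-s)/d - 1)_k, where (x)_k = x(x-1)···(x-k+1) denotes the falling factorial. -/

import Mathlib

/-!
Write `E n` for the sum over partitions `P` of `n` of `∏ t_i / z(P)`, where
`z(P) = ∏ i ^ c_i * c_i !`. Since `n ! / z(P)` permutations have cycle type `P`, the left-hand side
is `k ! * E k`. Marking one part of a partition gives the recurrence
`n * E n = ∑_{i = 1}^n t_i * E (n - i)` (`natCast_mul_partitionSum`), which is the logarithmic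
derivative of `∑ E n u ^ n = exp (∑ t_i u ^ i / i)`.

The right-hand side is `k ! * b k`, where `b n = x (x + 1) ⋯ (x + n - 1) / n !` and
`x = s + (q - s) / d`; these numbers satisfy the same recurrence with every `t_i` equal to `x`
(`natCast_mul_risingCoeff`). The hypothesis `d ≤ q` forces `x ≥ 1`, so `b` is nondecreasing, and
hence `d * ∑_{d ∣ i} b (n - i) ≤ ∑_i b (n - i)`: each term with `d ∣ i` is at most each of the
`d` terms with index in `(i - d, i]`. Strong induction now gives `E n ≤ b n`, because
`n * E n ≤ s * ∑_i b (n - i) + (q - s) * ∑_{d ∣ i} b (n - i) ≤ x * ∑_i b (n - i) = n * b n`.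
-/

/-- The full cycle type of a permutation of `Fin k` (fixed points counted as
1-cycles). -/
def fullCycleType {k : ℕ} (σ : Equiv.Perm (Fin k)) : Multiset ℕ :=
  σ.cycleType + Multiset.replicate (k - σ.support.card) 1

/-- `N(c_1, …, c_k)`: the number of permutations in `S_k` whose cycle type is the
partition `P`. -/
noncomputable def permCountOfType {k : ℕ} (P : Nat.Partition k) : ℕ :=
  Nat.card {σ : Equiv.Perm (Fin k) // fullCycleType σ = P.parts}

/-- Generalised binomial coefficient with real upper argument, defined via the
falling factorial. -/
noncomputable def genBinom (x : ℝ) (i : ℕ) : ℝ :=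
  (∏ j ∈ Finset.range i, (x - j)) / (i.factorial : ℝ)

/-- `z(m) = ∏ i ^ c_i * c_i !`, where `c_i` is the multiplicity of `i` in `m`: the order of the
centralizer of a permutation with full cycle type `m`. -/
def centralizerOrder (m : Multiset ℕ) : ℕ :=
  m.prod * ∏ n ∈ m.toFinset, (m.count n).factorial

lemma centralizerOrder_cons (a : ℕ) (m : Multiset ℕ) :
    centralizerOrder (a ::ₘ m) = a * (m.count a + 1) * centralizerOrder m := by
  unfold centralizerOrder
  have h1 : ∏ n ∈ m.toFinset, (m.count n).factorial
      = ∏ n ∈ insert a m.toFinset, (m.count n).factorial := by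
    apply Finset.prod_subset (Finset.subset_insert _ _)
    intro x _ hx
    rw [Multiset.mem_toFinset] at hx
    simp [Multiset.count_eq_zero_of_notMem hx]
  have h2 : ∏ n ∈ (insert a m.toFinset).erase a, ((a ::ₘ m).count n).factorial
      = ∏ n ∈ (insert a m.toFinset).erase a, (m.count n).factorial := by
    apply Finset.prod_congr rfl
    intro x hx
    rw [Multiset.count_cons_of_ne (Finset.ne_of_mem_erase hx)]
  rw [h1, Multiset.toFinset_cons, Multiset.prod_cons,
    ← Finset.mul_prod_erase _ _ (Finset.mem_insert_self a m.toFinset),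
    ← Finset.mul_prod_erase _ (fun n => (m.count n).factorial)
      (Finset.mem_insert_self a m.toFinset), h2, Multiset.count_cons_self, Nat.factorial_succ]
  ring

lemma centralizerOrder_add_replicate_one (m : Multiset ℕ) (hm : 1 ∉ m) (r : ℕ) :
    centralizerOrder (m + Multiset.replicate r 1) = r.factorial * centralizerOrder m := by
  induction r with
  | zero => simp
  | succ r ih =>
    rw [Multiset.replicate_succ, Multiset.add_cons, centralizerOrder_cons, ih,
      Multiset.count_add, Multiset.count_eq_zero_of_notMem hm, Multiset.count_replicate_self,
      Nat.factorial_succ]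
    ring

lemma centralizerOrder_pos {m : Multiset ℕ} (hm : ∀ i ∈ m, 0 < i) : 0 < centralizerOrder m :=
  Nat.mul_pos (Multiset.prod_pos hm) (Finset.prod_pos fun _ _ => Nat.factorial_pos _)

lemma Nat.Partition.parts_eq_filter_add_replicate {k : ℕ} (P : Nat.Partition k) :
    P.parts = P.parts.filter (2 ≤ ·)
      + Multiset.replicate (k - (P.parts.filter (2 ≤ ·)).sum) 1 := by
  have h1 : P.parts.filter (fun i => ¬ 2 ≤ i)
      = Multiset.replicate (P.parts.filter (fun i => ¬ 2 ≤ i)).card 1 := by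
    apply Multiset.eq_replicate_card.2
    intro b hb
    rw [Multiset.mem_filter] at hb
    have := P.parts_pos hb.1
    omega
  have h2 := Multiset.filter_add_not (2 ≤ ·) P.parts
  have h3 := congrArg Multiset.sum h2
  rw [h1, Multiset.sum_add, P.parts_sum, Multiset.sum_replicate, smul_eq_mul, mul_one] at h3
  have h4 : k - (P.parts.filter (2 ≤ ·)).sum = (P.parts.filter (fun i => ¬ 2 ≤ i)).card := by
    omega
  rw [h4, ← h1, h2]

lemma fullCycleType_eq_iff {k : ℕ} (P : Nat.Partition k) (σ : Equiv.Perm (Fin k)) :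
    fullCycleType σ = P.parts ↔ σ.cycleType = P.parts.filter (2 ≤ ·) := by
  constructor
  · intro h
    have h1 : σ.partition.parts = fullCycleType σ := by
      rw [Equiv.Perm.parts_partition, Fintype.card_fin, fullCycleType]
    rw [← h, ← h1, Equiv.Perm.filter_parts_partition_eq_cycleType]
  · intro h
    rw [P.parts_eq_filter_add_replicate, fullCycleType, ← Equiv.Perm.sum_cycleType, h]

/-- Orbit-stabilizer for conjugation: each cycle type `P` is attained by `k ! / z(P)`
permutations. -/
lemma permCountOfType_mul_centralizerOrder {k : ℕ} (P : Nat.Partition k) :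
    permCountOfType P * centralizerOrder P.parts = k.factorial := by
  have hsum : (P.parts.filter (2 ≤ ·)).sum ≤ k := by
    have := congrArg Multiset.sum P.parts_eq_filter_add_replicate
    rw [Multiset.sum_add, P.parts_sum] at this
    omega
  have h := Equiv.Perm.card_of_cycleType_mul_eq (Fin k) (P.parts.filter (2 ≤ ·))
  rw [Fintype.card_fin, if_pos ⟨hsum, fun a ha => (Multiset.mem_filter.1 ha).2⟩] at h
  have hcount : permCountOfType P = Finset.card
      ({g | g.cycleType = P.parts.filter (2 ≤ ·)} : Finset (Equiv.Perm (Fin k))) := by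
    unfold permCountOfType
    simp_rw [fullCycleType_eq_iff]
    rw [Nat.card_eq_fintype_card, Fintype.card_subtype]
  have hz : centralizerOrder P.parts = (k - (P.parts.filter (2 ≤ ·)).sum).factorial *
      centralizerOrder (P.parts.filter (2 ≤ ·)) := by
    conv_lhs => rw [P.parts_eq_filter_add_replicate]
    exact centralizerOrder_add_replicate_one _ (by simp) _
  rw [hcount, hz, ← h, centralizerOrder]
  ring

/-- The contribution `∏ t_i ^ c_i / z(m)` of the cycle type `m` to `C_n(t) / n !`. -/
noncomputable def cycleWeight (t : ℕ → ℝ) (m : Multiset ℕ) : ℝ :=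
  (m.map t).prod / centralizerOrder m

/-- `C_n(t_1, …, t_n) / n !`, written as a sum over cycle types. -/
noncomputable def partitionSum (t : ℕ → ℝ) (n : ℕ) : ℝ :=
  ∑ P : Nat.Partition n, cycleWeight t P.parts

lemma cycleWeight_cons (t : ℕ → ℝ) {a : ℕ} (ha : 0 < a) (m : Multiset ℕ) :
    ((a * (a ::ₘ m).count a : ℕ) : ℝ) * cycleWeight t (a ::ₘ m) = t a * cycleWeight t m := by
  unfold cycleWeight
  rw [centralizerOrder_cons, Multiset.count_cons_self, Multiset.map_cons, Multiset.prod_cons,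
    Nat.cast_mul (a * (m.count a + 1)), ← mul_div_assoc, mul_div_mul_left, mul_div_assoc]
  positivity

lemma Nat.Partition.sum_mul_count {n : ℕ} (P : Nat.Partition n) :
    ∑ i ∈ Finset.range n, (i + 1) * P.parts.count (i + 1) = n := by
  have h : P.parts.sum = ∑ i ∈ Finset.Ico 1 (n + 1), P.parts.count i * i := by
    rw [Finset.sum_multiset_count]
    apply Finset.sum_subset
    · intro i hi
      rw [Multiset.mem_toFinset] at hi
      have := P.parts_pos hi
      have := P.le_of_mem_parts hi
      simp
      omega
    · intro i _ hi
      rw [Multiset.mem_toFinset] at hi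
      simp [Multiset.count_eq_zero_of_notMem hi]
  rw [P.parts_sum, Finset.sum_Ico_eq_sum_range] at h
  conv_rhs => rw [h]
  apply Finset.sum_congr rfl
  intro i _
  rw [add_comm 1 i, mul_comm]

lemma sum_mul_count_mul_cycleWeight (t : ℕ → ℝ) {n a : ℕ} (ha : 1 ≤ a) (han : a ≤ n) :
    ∑ P : Nat.Partition n, ((a * P.parts.count a : ℕ) : ℝ) * cycleWeight t P.parts
      = t a * partitionSum t (n - a) := by
  have h1 : ∑ P : Nat.Partition n, ((a * P.parts.count a : ℕ) : ℝ) * cycleWeight t P.parts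
      = ∑ P : {P : Nat.Partition n // a ∈ P.parts},
        ((a * P.1.parts.count a : ℕ) : ℝ) * cycleWeight t P.1.parts := by
    classical
    rw [← Finset.sum_subtype (Finset.univ.filter fun P : Nat.Partition n => a ∈ P.parts)
      (by simp) fun P => ((a * P.parts.count a : ℕ) : ℝ) * cycleWeight t P.parts]
    symm
    apply Finset.sum_filter_of_ne
    intro P _ hP
    by_contra hmem
    simp [Multiset.count_eq_zero_of_notMem hmem] at hP
  rw [h1, ← Equiv.sum_comp (Nat.Partition.partitionWithPartEquiv ha han).symm, partitionSum,
    Finset.mul_sum]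
  apply Finset.sum_congr rfl
  intro Q _
  rw [Nat.Partition.partitionWithPartEquiv_symm_apply_parts, cycleWeight_cons t ha]

/-- The recurrence obtained by weighting each partition of `n` with the sum `n` of its parts and
deleting the marked part. -/
lemma natCast_mul_partitionSum (t : ℕ → ℝ) (n : ℕ) :
    (n : ℝ) * partitionSum t n
      = ∑ i ∈ Finset.range n, t (i + 1) * partitionSum t (n - (i + 1)) := by
  have h : ∀ i ∈ Finset.range n, t (i + 1) * partitionSum t (n - (i + 1))
      = ∑ P : Nat.Partition n,
        (((i + 1) * P.parts.count (i + 1) : ℕ) : ℝ) * cycleWeight t P.parts := fun i hi =>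
    (sum_mul_count_mul_cycleWeight t (by omega) (Finset.mem_range.1 hi)).symm
  rw [Finset.sum_congr rfl h, Finset.sum_comm, partitionSum, Finset.mul_sum]
  apply Finset.sum_congr rfl
  intro P _
  rw [← Finset.sum_mul, ← Nat.cast_sum, P.sum_mul_count]

lemma partitionSum_zero (t : ℕ → ℝ) : partitionSum t 0 = 1 := by
  rw [partitionSum, Fintype.sum_unique]
  simp [cycleWeight, centralizerOrder]

/-- The coefficient `x (x + 1) ⋯ (x + n - 1) / n !` of `u ^ n` in `(1 - u) ^ (-x)`. -/
noncomputable def risingCoeff (x : ℝ) (n : ℕ) : ℝ :=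
  (∏ j ∈ Finset.range n, (x + j)) / n.factorial

lemma risingCoeff_succ (x : ℝ) (n : ℕ) :
    ((n : ℝ) + 1) * risingCoeff x (n + 1) = (x + n) * risingCoeff x n := by
  unfold risingCoeff
  rw [Finset.prod_range_succ, Nat.factorial_succ]
  have : (n.factorial : ℝ) ≠ 0 := by positivity
  push_cast
  field_simp

lemma natCast_mul_risingCoeff (x : ℝ) (n : ℕ) :
    (n : ℝ) * risingCoeff x n = x * ∑ i ∈ Finset.range n, risingCoeff x (n - (i + 1)) := by
  induction n with
  | zero => simp
  | succ n ih =>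
    rw [Finset.sum_range_succ']
    simp only [Nat.add_sub_add_right, zero_add, Nat.add_sub_cancel]
    rw [mul_add, ← ih, Nat.cast_succ, risingCoeff_succ]
    ring

lemma risingCoeff_nonneg {x : ℝ} (hx : 1 ≤ x) (n : ℕ) : 0 ≤ risingCoeff x n :=
  div_nonneg (Finset.prod_nonneg fun j _ => by positivity) (by positivity)

lemma risingCoeff_monotone {x : ℝ} (hx : 1 ≤ x) : Monotone (risingCoeff x) := by
  apply monotone_nat_of_le_succ
  intro n
  have h1 := risingCoeff_succ x n
  have h2 := risingCoeff_nonneg hx n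
  have h3 : (0 : ℝ) < n + 1 := by positivity
  nlinarith

/-- For antitone `f` the terms `f i` with `d ∣ i` make up at most a `1 / d` share of the sum over
`1 ≤ i ≤ n`; the term `(n % d) * f n` accounts for the incomplete last block and makes the
induction work. -/
lemma mul_sum_dvd_add_le {f : ℕ → ℝ} (hf : Antitone f) {d : ℕ} (hd : 1 ≤ d) (n : ℕ) :
    (d : ℝ) * (∑ i ∈ Finset.range n, if d ∣ i + 1 then f (i + 1) else 0) + (n % d : ℕ) * f n
      ≤ ∑ i ∈ Finset.range n, f (i + 1) := by
  induction n with
  | zero => simp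
  | succ n ih =>
    rw [Finset.sum_range_succ, Finset.sum_range_succ]
    have hle : ((n % d : ℕ) : ℝ) * f (n + 1) ≤ (n % d : ℕ) * f n :=
      mul_le_mul_of_nonneg_left (hf n.le_succ) (Nat.cast_nonneg _)
    by_cases h : d ∣ n + 1
    · have h1 : (n + 1) % d = 0 := Nat.mod_eq_zero_of_dvd h
      have h2 : n % d + 1 = d := by
        by_contra hne
        have hlt : n % d + 1 < d := by
          have := Nat.mod_lt n hd
          omega
        rw [← Nat.mod_add_mod, Nat.mod_eq_of_lt hlt] at h1
        omega
      have h3 : ((n % d : ℕ) : ℝ) = d - 1 := by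
        rw [eq_sub_iff_add_eq]
        exact_mod_cast h2
      rw [if_pos h, h1]
      rw [h3] at hle ih
      push_cast
      linarith
    · have h2 : (n + 1) % d = n % d + 1 := by
        have hlt : n % d + 1 < d := by
          have h3 := Nat.mod_lt n hd
          by_contra hge
          have h4 : n % d + 1 = d := by omega
          apply h
          rw [Nat.dvd_iff_mod_eq_zero, ← Nat.mod_add_mod, h4, Nat.mod_self]
        rw [← Nat.mod_add_mod, Nat.mod_eq_of_lt hlt]
      rw [if_neg h, h2]
      push_cast
      linarith

/-- The bound `C_n(t) / n ! ≤ x (x + 1) ⋯ (x + n - 1) / n !`, by strong induction along the two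
recurrences. -/
lemma partitionSum_le_risingCoeff {d : ℕ} (hd : 1 ≤ d) {q s : ℝ} (hs : 0 ≤ s) (hsq : s ≤ q)
    (hx : 1 ≤ s + (q - s) / d) (n : ℕ) :
    partitionSum (fun i => if d ∣ i then q else s) n ≤ risingCoeff (s + (q - s) / d) n := by
  induction n using Nat.strong_induction_on with
  | _ n ih =>
    rcases Nat.eq_zero_or_pos n with rfl | hn
    · simp [partitionSum_zero, risingCoeff]
    set x := s + (q - s) / d with hxdef
    set f : ℕ → ℝ := fun i => risingCoeff x (n - i) with hfdef
    have hf : Antitone f := fun i j hij => risingCoeff_monotone hx (Nat.sub_le_sub_left hij n)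
    have hd0 : (0 : ℝ) < d := by exact_mod_cast hd
    have hblock : (d : ℝ) * (∑ i ∈ Finset.range n, if d ∣ i + 1 then f (i + 1) else 0)
        ≤ ∑ i ∈ Finset.range n, f (i + 1) := by
      have h1 := mul_sum_dvd_add_le hf hd n
      have h2 : 0 ≤ ((n % d : ℕ) : ℝ) * f n :=
        mul_nonneg (Nat.cast_nonneg _) (risingCoeff_nonneg hx _)
      linarith
    have hstep : (n : ℝ) * partitionSum (fun i => if d ∣ i then q else s) n
        ≤ (n : ℝ) * risingCoeff x n := by
      rw [natCast_mul_partitionSum, natCast_mul_risingCoeff]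
      calc ∑ i ∈ Finset.range n, (if d ∣ i + 1 then q else s) *
            partitionSum (fun i => if d ∣ i then q else s) (n - (i + 1))
          ≤ ∑ i ∈ Finset.range n, (if d ∣ i + 1 then q else s) * f (i + 1) := by
            apply Finset.sum_le_sum
            intro i _
            apply mul_le_mul_of_nonneg_left (ih _ (by omega))
            split_ifs <;> linarith
        _ = s * ∑ i ∈ Finset.range n, f (i + 1) + (q - s) / d *
            (d * ∑ i ∈ Finset.range n, if d ∣ i + 1 then f (i + 1) else 0) := by
            rw [← mul_assoc, div_mul_cancel₀ _ hd0.ne', Finset.mul_sum, Finset.mul_sum,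
              ← Finset.sum_add_distrib]
            apply Finset.sum_congr rfl
            intro i _
            split_ifs <;> ring
        _ ≤ s * ∑ i ∈ Finset.range n, f (i + 1) + (q - s) / d *
            ∑ i ∈ Finset.range n, f (i + 1) := by
            have := mul_le_mul_of_nonneg_left hblock (div_nonneg (sub_nonneg.2 hsq) hd0.le)
            linarith
        _ = x * ∑ i ∈ Finset.range n, risingCoeff x (n - (i + 1)) := by
            rw [← add_mul]
    exact le_of_mul_le_mul_left hstep (by exact_mod_cast hn)

/-- Li–Wan combinatorial bound: if `t_i = q` when `d ∣ i` and `t_i = s` otherwise,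
with `q ≥ s ≥ 0`, then `C_k(t_1, …, t_k) ≤ (s + k + (q - s)/d - 1)_k`, where
`(x)_k` is the falling factorial. -/
theorem liWan_cycle_type_sum_le (k d : ℕ) (hk : 1 ≤ k) (hd : 1 ≤ d) (q s : ℝ)
    (hs : 0 ≤ s) (hsq : s ≤ q) (hdq : (d : ℝ) ≤ q) :
    (∑ P : Nat.Partition k, (permCountOfType P : ℝ) *
        (P.parts.map (fun i => if d ∣ i then q else s)).prod) ≤
      ∏ j ∈ Finset.range k, (s + (k : ℝ) + (q - s) / d - 1 - j) := by
  have hd1 : (1 : ℝ) ≤ d := by exact_mod_cast hd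
  have hx : 1 ≤ s + (q - s) / d := by
    rw [← sub_le_iff_le_add', le_div_iff₀ (by linarith)]
    nlinarith
  have hk0 : (k.factorial : ℝ) ≠ 0 := by positivity
  have hL : (∑ P : Nat.Partition k, (permCountOfType P : ℝ) *
      (P.parts.map (fun i => if d ∣ i then q else s)).prod)
      = k.factorial * partitionSum (fun i => if d ∣ i then q else s) k := by
    rw [partitionSum, Finset.mul_sum]
    apply Finset.sum_congr rfl
    intro P _
    have hz : (centralizerOrder P.parts : ℝ) ≠ 0 := by
      exact_mod_cast (centralizerOrder_pos fun i hi => P.parts_pos hi).ne'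
    rw [cycleWeight, ← permCountOfType_mul_centralizerOrder P]
    push_cast
    field_simp
  have hR : ∏ j ∈ Finset.range k, (s + (k : ℝ) + (q - s) / d - 1 - j)
      = k.factorial * risingCoeff (s + (q - s) / d) k := by
    rw [risingCoeff, mul_div_cancel₀ _ hk0, ← Finset.prod_range_reflect]
    apply Finset.prod_congr rfl
    intro j hj
    -- The truncated subtraction in the reflected index `k - 1 - j` is exact since `j < k`.
    have hj' : j + 1 ≤ k := Finset.mem_range.1 hj
    rw [Nat.sub_sub, add_comm 1 j, Nat.cast_sub hj']
    push_cast
    ring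
  rw [hL, hR]
  exact mul_le_mul_of_nonneg_left (partitionSum_le_risingCoeff hd hs hsq hx k) (by positivity)
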